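/- If there exist γ0 > 0 and α ∈ (0,1) such that K(v)^α / T(v;γ0) ≤ M for all v ∈ ℝ^d and some constant M, where T(·;γ) is the multivariate t density with γ degrees of freedom, then condition (C10) is satisfied for the base proposal density q(θ) = T(θ;γ) on ℝ^p, for any γ ≤ γ0 and any positive definite scale matrix Σ. -/

import Mathlib

open MeasureTheory Filter Matrix Set
open scoped Topology ENNReal NNReal

noncomputable section

namespace ABC

/-- Euclidean norm on `Fin k → ℝ`. -/
def euclNorm {k : ℕ} (x : Fin k → ℝ) : ℝ := Real.sqrt (∑ i, x i ^ 2)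

/-- Density at `x` of the multivariate normal distribution `N(μ, V)` on `ℝ^k`. -/
def gaussDensity {k : ℕ} (μ : Fin k → ℝ) (V : Matrix (Fin k) (Fin k) ℝ)
    (x : Fin k → ℝ) : ℝ :=
  (Real.sqrt ((2 * Real.pi) ^ k * V.det))⁻¹ *
    Real.exp (-(1 / 2) * ((x - μ) ⬝ᵥ (V⁻¹ *ᵥ (x - μ))))

/-- Density at `x` of the one-dimensional normal distribution `N(0, σ²)`. -/
def gaussDensity1 (σ2 x : ℝ) : ℝ :=
  (Real.sqrt (2 * Real.pi * σ2))⁻¹ * Real.exp (-(x ^ 2) / (2 * σ2))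

/-- Convergence in distribution (tested against bounded continuous functions) of a
sequence of random vectors to the centered Gaussian with covariance `V`. -/
def TendstoGauss {Ω : Type*} [MeasurableSpace Ω] (P : Measure Ω) {k : ℕ}
    (X : ℕ → Ω → (Fin k → ℝ)) (V : Matrix (Fin k) (Fin k) ℝ) : Prop :=
  ∀ g : (Fin k → ℝ) → ℝ, Continuous g → (∃ C, ∀ x, |g x| ≤ C) →
    Tendsto (fun n => ∫ ω, g (X n ω) ∂P) atTop
      (𝓝 (∫ x : Fin k → ℝ, g x * gaussDensity 0 V x))

/-- Convergence in distribution of a sequence of real random variables to `N(0, σ²)`. -/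
def TendstoGauss1 {Ω : Type*} [MeasurableSpace Ω] (P : Measure Ω)
    (X : ℕ → Ω → ℝ) (σ2 : ℝ) : Prop :=
  ∀ g : ℝ → ℝ, Continuous g → (∃ C, ∀ x, |g x| ≤ C) →
    Tendsto (fun n => ∫ ω, g (X n ω) ∂P) atTop (𝓝 (∫ x : ℝ, g x * gaussDensity1 σ2 x))

/-- CLT for a sequence of distributions on `ℝ^k` given by (Lebesgue) densities `fd n`:
the law of `a n • (X n - center)`, where `X n ~ fd n`, tends weakly to `N(0, V)`. -/
def DensTendstoGauss {k : ℕ} (fd : ℕ → (Fin k → ℝ) → ℝ) (a : ℕ → ℝ)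
    (center : Fin k → ℝ) (V : Matrix (Fin k) (Fin k) ℝ) : Prop :=
  ∀ g : (Fin k → ℝ) → ℝ, Continuous g → (∃ C, ∀ x, |g x| ≤ C) →
    Tendsto (fun n => ∫ x : Fin k → ℝ, g (a n • (x - center)) * fd n x) atTop
      (𝓝 (∫ x : Fin k → ℝ, g x * gaussDensity 0 V x))

/-- `Z n = O_p(r n)`: bounded in probability at rate `r`. -/
def IsBigOp {Ω : Type*} [MeasurableSpace Ω] (P : Measure Ω)
    (Z : ℕ → Ω → ℝ) (r : ℕ → ℝ) : Prop :=
  ∀ ε : ℝ, 0 < ε → ∃ M : ℝ, 0 < M ∧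
    ∀ᶠ n in atTop, P {ω | M * |r n| < |Z n ω|} ≤ ENNReal.ofReal ε

/-- `Z n = Θ_p(r n)`: bounded above and below away from zero in probability. -/
def IsThetap {Ω : Type*} [MeasurableSpace Ω] (P : Measure Ω)
    (Z : ℕ → Ω → ℝ) (r : ℕ → ℝ) : Prop :=
  IsBigOp P Z r ∧ ∀ ε : ℝ, 0 < ε → ∃ m : ℝ, 0 < m ∧
    ∀ᶠ n in atTop, P {ω | |Z n ω| < m * |r n|} ≤ ENNReal.ofReal ε

/-- Convergence in probability of `Z n` to the constant `c`. -/
def TendstoInProb {Ω : Type*} [MeasurableSpace Ω] (P : Measure Ω)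
    (Z : ℕ → Ω → ℝ) (c : ℝ) : Prop :=
  ∀ δ : ℝ, 0 < δ → Tendsto (fun n => P {ω | δ < |Z n ω - c|}) atTop (𝓝 0)

variable {p d m : ℕ}

/-- Jacobian matrix (`k × p`) of a map `s : ℝ^p → ℝ^k` at `θ`. -/
def jacobian {k : ℕ} (s : (Fin p → ℝ) → (Fin k → ℝ)) (θ : Fin p → ℝ) :
    Matrix (Fin k) (Fin p) ℝ :=
  Matrix.of fun i j => fderiv ℝ (fun x => s x i) θ (Pi.single j 1)

/-- Gradient vector of a scalar function at `θ`. -/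
def grad (h : (Fin p → ℝ) → ℝ) (θ : Fin p → ℝ) : Fin p → ℝ :=
  fun j => fderiv ℝ h θ (Pi.single j 1)

/-- Moment, shape and tail conditions (C2)(ii)–(iv) for a (kernel-like) function on `ℝ^d`:
finite mixed moments of all orders up to `pdim + 6`, a radially decreasing shape with
respect to a positive diagonal quadratic form, and exponentially decaying tails. -/
def KernelShape (pdim : ℕ) {k : ℕ} (K : (Fin k → ℝ) → ℝ) : Prop :=
  (∀ l : ℕ, l ≤ pdim + 6 → ∀ idx : Fin l → Fin k,
      Integrable (fun v : Fin k → ℝ => (∏ j, v (idx j)) * K v)) ∧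
  (∃ Λ : Fin k → ℝ, (∀ i, 0 < Λ i) ∧ ∃ κ : ℝ → ℝ,
      (∀ v, K v = κ (∑ i, Λ i * v i ^ 2)) ∧ AntitoneOn κ (Set.Ici 0)) ∧
  (∃ c₁ α₁ C : ℝ, 0 < c₁ ∧ 0 < α₁ ∧
      ∀ v : Fin k → ℝ, K v ≤ C * Real.exp (-c₁ * euclNorm v ^ α₁))

/-- The data of the ABC set-up: parameter space, true parameter, prior, summary-statistic
densities, kernel, bandwidths, CLT rates and limits, matrix square root of the asymptotic
covariance, and the Edgeworth-remainder data of condition (C4). -/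
structure Model (p d : ℕ) where
  Th : Set (Fin p → ℝ)
  θ0 : Fin p → ℝ
  δ0 : ℝ
  prior : (Fin p → ℝ) → ℝ
  f : ℕ → (Fin p → ℝ) → (Fin d → ℝ) → ℝ
  K : (Fin d → ℝ) → ℝ
  ε : ℕ → ℝ
  a : ℕ → ℝ
  sbar : (Fin p → ℝ) → (Fin d → ℝ)
  A : (Fin p → ℝ) → Matrix (Fin d) (Fin d) ℝ
  Asqrt : (Fin p → ℝ) → Matrix (Fin d) (Fin d) ℝ
  αn : ℕ → ℝ
  rmax : (Fin d → ℝ) → ℝ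

namespace Model

variable (M : Model p d)

/-- The neighbourhood `Th₀ = {θ : |θ - θ0| < δ0}` of the true parameter. -/
def P0 : Set (Fin p → ℝ) := Metric.ball M.θ0 M.δ0

/-- The information matrix `I(θ) = Ds(θ)ᵀ A(θ)⁻¹ Ds(θ)` based on the summary. -/
def Imat (θ : Fin p → ℝ) : Matrix (Fin p) (Fin p) ℝ :=
  (jacobian M.sbar θ)ᵀ * (M.A θ)⁻¹ * jacobian M.sbar θ

/-- Density of the standardized summary `W_n(S_n) = a_n A(θ)^{-1/2}(S_n - s(θ))`
under `S_n ~ f_n(·|θ)` (obtained from `f_n(·|θ)` by the change of variables). -/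
def fW (n : ℕ) (θ : Fin p → ℝ) (w : Fin d → ℝ) : ℝ :=
  ((M.a n) ^ d)⁻¹ * Real.sqrt (M.A θ).det *
    M.f n θ (M.sbar θ + (M.a n)⁻¹ • (M.Asqrt θ *ᵥ w))

/-- The ABC likelihood `f_ABC(s|θ, ε_n) = ∫ f_n(s + ε_n v | θ) K(v) dv`. -/
def fABC (n : ℕ) (θ : Fin p → ℝ) (s : Fin d → ℝ) : ℝ :=
  ∫ v : Fin d → ℝ, M.f n θ (s + M.ε n • v) * M.K v

/-- The ABC posterior mean of a vector-valued function `h`. -/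
def hABC {m : ℕ} (h : (Fin p → ℝ) → (Fin m → ℝ)) (n : ℕ) (s : Fin d → ℝ) :
    Fin m → ℝ :=
  (∫ θ : Fin p → ℝ, M.prior θ * M.fABC n θ s)⁻¹ •
    ∫ θ : Fin p → ℝ, (M.prior θ * M.fABC n θ s) • h θ

/-- The ABC posterior mean of a scalar function `h`. -/
def hABCs (h : (Fin p → ℝ) → ℝ) (n : ℕ) (s : Fin d → ℝ) : ℝ :=
  (∫ θ : Fin p → ℝ, M.prior θ * M.fABC n θ s)⁻¹ *
    ∫ θ : Fin p → ℝ, M.prior θ * M.fABC n θ s * h θ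

/-- The posterior mean of `h` given the summary `s` (posterior `∝ π(θ) f_n(s|θ)`). -/
def postMeanSummary {m : ℕ} (h : (Fin p → ℝ) → (Fin m → ℝ)) (n : ℕ)
    (s : Fin d → ℝ) : Fin m → ℝ :=
  (∫ θ : Fin p → ℝ, M.prior θ * M.f n θ s)⁻¹ •
    ∫ θ : Fin p → ℝ, (M.prior θ * M.f n θ s) • h θ

/-- Condition (C1): the true parameter is interior. -/
def Cond1 : Prop := 0 < M.δ0 ∧ M.P0 ⊆ M.Th

/-- Condition (C2) together with the running assumptions `0 ≤ K ≤ 1`, `max K = 1`. -/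
def Cond2 : Prop :=
  (∀ v, 0 ≤ M.K v) ∧ (∀ v, M.K v ≤ 1) ∧ (∃ v, M.K v = 1) ∧
  (∫ v : Fin d → ℝ, M.K v • v) = 0 ∧ KernelShape p M.K

/-- Condition (C3): CLT for the summary statistic, regularity and identifiability,
and full rank of the information matrix at `θ0`; `Asqrt` is the square root of `A`. -/
def Cond3 : Prop :=
  Tendsto M.a atTop atTop ∧
  (∀ θ ∈ M.Th, DensTendstoGauss (fun n => M.f n θ) M.a (M.sbar θ) (M.A θ)) ∧
  ContDiffOn ℝ 1 M.sbar M.P0 ∧ (∀ i j, ContDiffOn ℝ 1 (fun θ => M.A θ i j) M.P0) ∧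
  (∀ θ, (M.A θ).PosDef) ∧
  (∀ θ, M.Asqrt θ * M.Asqrt θ = M.A θ) ∧ (∀ θ, (M.Asqrt θ).IsSymm) ∧
  (∀ θ, IsUnit (M.Asqrt θ)) ∧
  (∀ θ ∈ M.Th, (M.sbar θ = M.sbar M.θ0 ↔ θ = M.θ0)) ∧
  IsUnit (M.Imat M.θ0)

/-- Condition (C4): uniform Edgeworth-type control, at rate `α_n` with
`α_n / a_n^{2/5} → ∞`, of the difference between the density of the standardized
summary and its standard normal limit, by an integrable envelope `r_max`. -/
def Cond4 : Prop :=
  Tendsto (fun n => M.αn n / (M.a n) ^ ((2 : ℝ) / 5)) atTop atTop ∧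
  (∀ w, 0 ≤ M.rmax w) ∧ (∫ w : Fin d → ℝ, M.rmax w) = 1 ∧ KernelShape p M.rmax ∧
  ∃ c₃ : ℝ, 0 < c₃ ∧ ∀ n : ℕ, ∀ θ ∈ M.P0, ∀ w : Fin d → ℝ,
    M.αn n * |M.fW n θ w - gaussDensity 0 (1 : Matrix (Fin d) (Fin d) ℝ) w| ≤
      c₃ * M.rmax w

/-- Condition (C5): exponentially decreasing tails of the standardized summary density,
uniformly outside `Th₀`, and boundedness of `A` on `Th`. -/
def Cond5 : Prop :=
  (∃ c₂ α₂ C : ℝ, 0 < c₂ ∧ 0 < α₂ ∧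
      ∀ n : ℕ, ∀ θ, θ ∉ M.P0 → ∀ w : Fin d → ℝ,
        M.fW n θ w ≤ C * Real.exp (-c₂ * euclNorm w ^ α₂)) ∧
  ∃ MA : ℝ, ∀ θ ∈ M.Th, ∀ i j, |M.A θ i j| ≤ MA

/-- Condition (C6): the prior is a continuously differentiable density near `θ0`,
positive at `θ0`. -/
def Cond6 : Prop :=
  ContDiffOn ℝ 1 M.prior M.P0 ∧ 0 < M.prior M.θ0 ∧ (∀ θ, 0 ≤ M.prior θ) ∧
  (∫ θ : Fin p → ℝ, M.prior θ) = 1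

/-- Condition (C7) for a vector-valued function of interest `h`. -/
def Cond7 {m : ℕ} (h : (Fin p → ℝ) → (Fin m → ℝ)) : Prop :=
  ContDiffOn ℝ 1 h M.P0 ∧ ∀ k : Fin m, (fun j => jacobian h M.θ0 k j) ≠ 0

/-- Condition (C8) for a vector-valued function of interest `h`. -/
def Cond8 {m : ℕ} (h : (Fin p → ℝ) → (Fin m → ℝ)) : Prop :=
  ∀ k : Fin m, Integrable (fun θ : Fin p → ℝ => |h θ k| * M.prior θ) ∧
    Integrable (fun θ : Fin p → ℝ => h θ k ^ 2 * M.prior θ)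

/-- Condition (C7) for a scalar function of interest. -/
def Cond7s (h : (Fin p → ℝ) → ℝ) : Prop :=
  ContDiffOn ℝ 1 h M.P0 ∧ grad h M.θ0 ≠ 0

/-- Condition (C8) for a scalar function of interest. -/
def Cond8s (h : (Fin p → ℝ) → ℝ) : Prop :=
  Integrable (fun θ : Fin p → ℝ => |h θ| * M.prior θ) ∧
    Integrable (fun θ : Fin p → ℝ => h θ ^ 2 * M.prior θ)

/-- Positivity of the bandwidths. -/
def Bandpos : Prop := ∀ n, 0 < M.ε n

/-- `ε_n = o(a_n^{-3/5})`. -/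
def BandwidthSmall : Prop :=
  Tendsto (fun n => M.ε n * (M.a n) ^ ((3 : ℝ) / 5)) atTop (𝓝 0)

/-- `ε_n = o(a_n^{-1/2})`. -/
def BandwidthSmall' : Prop :=
  Tendsto (fun n => M.ε n * (M.a n) ^ ((1 : ℝ) / 2)) atTop (𝓝 0)

/-- The observed summaries `s_obs` are generated from the model at the true parameter:
`sobs n` is measurable with law given by the density `f_n(·|θ0)`. -/
def DataLaw {Ω : Type*} [MeasurableSpace Ω] (P : Measure Ω)
    (sobs : ℕ → Ω → (Fin d → ℝ)) : Prop :=
  ∀ n, Measurable (sobs n) ∧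
    Measure.map (sobs n) P =
      volume.withDensity (fun s => ENNReal.ofReal (M.f n M.θ0 s))

/-- `θhat` is a maximum likelihood estimator based on the summary statistic. -/
def IsMLES {Ω : Type*} (sobs : ℕ → Ω → (Fin d → ℝ))
    (θhat : ℕ → Ω → (Fin p → ℝ)) : Prop :=
  ∀ n ω, θhat n ω ∈ M.Th ∧
    ∀ θ ∈ M.Th, M.f n θ (sobs n ω) ≤ M.f n (θhat n ω) (sobs n ω)

/-- The limit regime of `a_n ε_n` (`c_ε` finite iff `fc = true`), together with the
induced rate `a_{n,ε}`: `a_{n,ε} = a_n` if `c_ε < ∞` and `a_{n,ε} = ε_n⁻¹` otherwise. -/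
def ScaleRateB (fc : Bool) (anε : ℕ → ℝ) : Prop :=
  if fc then
    (∃ c : ℝ, Tendsto (fun n => M.a n * M.ε n) atTop (𝓝 c)) ∧ anε = M.a
  else
    Tendsto (fun n => M.a n * M.ε n) atTop atTop ∧ anε = fun n => (M.ε n)⁻¹

/-- The standardized observed summary `T_obs = a_n A(θ0)^{-1/2} (s_obs - s(θ0))`. -/
def Tobs {Ω : Type*} (sobs : ℕ → Ω → (Fin d → ℝ)) (n : ℕ) (ω : Ω) : Fin d → ℝ :=
  M.a n • ((M.Asqrt M.θ0)⁻¹ *ᵥ (sobs n ω - M.sbar M.θ0))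

end Model

end ABC

namespace ABC

variable {p d : ℕ}

/-- The (unnormalized) limiting joint density `g_n(t, v; τ)` of the rescaled parameter
`t` and summary discrepancy `v`: for `a_n ε_n → c < ∞` (`fc = true`) it is
`N((Ds(θ0)+τ)t ; a_n ε_n v + A(θ0)^{1/2} T_obs , A(θ0)) K(v)`, and for `a_n ε_n → ∞`
(`fc = false`) it is
`N((Ds(θ0)+τ)t ; v + (a_n ε_n)⁻¹ A(θ0)^{1/2} T_obs , (a_n ε_n)⁻² A(θ0)) K(v)`.
Here `c` stands for the value `a_n ε_n`. -/
def rawg (Ds : Matrix (Fin d) (Fin p) ℝ) (Ahalf A : Matrix (Fin d) (Fin d) ℝ)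
    (K : (Fin d → ℝ) → ℝ) (c : ℝ) (fc : Bool) (Tobs : Fin d → ℝ)
    (τ : Matrix (Fin d) (Fin p) ℝ) (t : Fin p → ℝ) (v : Fin d → ℝ) : ℝ :=
  if fc then gaussDensity (c • v + Ahalf *ᵥ Tobs) A ((Ds + τ) *ᵥ t) * K v
  else gaussDensity (v + c⁻¹ • (Ahalf *ᵥ Tobs)) ((c⁻¹) ^ 2 • A) ((Ds + τ) *ᵥ t) * K v

/-- The marginal `∫ g_n(t, v; τ) dv`. -/
def gmargin (Ds : Matrix (Fin d) (Fin p) ℝ) (Ahalf A : Matrix (Fin d) (Fin d) ℝ)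
    (K : (Fin d → ℝ) → ℝ) (c : ℝ) (fc : Bool) (Tobs : Fin d → ℝ)
    (τ : Matrix (Fin d) (Fin p) ℝ) (t : Fin p → ℝ) : ℝ :=
  ∫ v : Fin d → ℝ, rawg Ds Ahalf A K c fc Tobs τ t v

/-- The normalized marginal density `g_n(t; τ)`. -/
def gnorm (Ds : Matrix (Fin d) (Fin p) ℝ) (Ahalf A : Matrix (Fin d) (Fin d) ℝ)
    (K : (Fin d → ℝ) → ℝ) (c : ℝ) (fc : Bool) (Tobs : Fin d → ℝ)
    (τ : Matrix (Fin d) (Fin p) ℝ) (t : Fin p → ℝ) : ℝ :=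
  gmargin Ds Ahalf A K c fc Tobs τ t /
    ∫ t' : Fin p → ℝ, gmargin Ds Ahalf A K c fc Tobs τ t'

/-- Condition (C10): there are `α ∈ (0,1)` and a small enough `δ > 0` such that, for any
`μ_n` bounded in probability,
`sup_{t ∈ ℝ^p, τᵀτ ≤ δ I_p} g_n(t; τ)^α / q(Σ^{-1/2}(t - μ_n)) = O_p(1)`. -/
def Cond10 {Ω : Type*} [MeasurableSpace Ω] (P : MeasureTheory.Measure Ω)
    (Ds : Matrix (Fin d) (Fin p) ℝ) (Ahalf A : Matrix (Fin d) (Fin d) ℝ)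
    (K : (Fin d → ℝ) → ℝ) (c : ℕ → ℝ) (fc : Bool) (Tobs : ℕ → Ω → (Fin d → ℝ))
    (q : (Fin p → ℝ) → ℝ) (Sgsqrt : Matrix (Fin p) (Fin p) ℝ) : Prop :=
  ∃ α : ℝ, α ∈ Set.Ioo (0 : ℝ) 1 ∧ ∃ δ : ℝ, 0 < δ ∧
    ∀ μ : ℕ → Ω → (Fin p → ℝ), IsBigOp P (fun n ω => ‖μ n ω‖) (fun _ => 1) →
      ∀ εp : ℝ, 0 < εp → ∃ Mb : ℝ, 0 < Mb ∧ ∀ᶠ n in Filter.atTop,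
        P {ω | ∃ (t : Fin p → ℝ) (τ : Matrix (Fin d) (Fin p) ℝ),
            (δ • (1 : Matrix (Fin p) (Fin p) ℝ) - τᵀ * τ).PosSemidef ∧
            Mb * q (Sgsqrt⁻¹ *ᵥ (t - μ n ω)) <
              gnorm Ds Ahalf A K (c n) fc (Tobs n ω) τ t ^ α} ≤ ENNReal.ofReal εp

end ABC

namespace ABC

/-- The multivariate t density with `γ` degrees of freedom in dimension `m`. -/
def tDensity (m : ℕ) (γ : ℝ) (x : Fin m → ℝ) : ℝ :=
  Real.Gamma ((γ + m) / 2) /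
      (Real.Gamma (γ / 2) * (γ * Real.pi) ^ ((m : ℝ) / 2)) *
    (1 + euclNorm x ^ 2 / γ) ^ (-(γ + m) / 2)

end ABC

namespace ABC

lemma expDecay (lam a : ℝ) (hl : 0 < lam) (ha : 0 < a) (N : ℕ) :
    ∃ C : ℝ, 0 ≤ C ∧ ∀ r : ℝ, 0 ≤ r → Real.exp (-lam * r ^ a) * (1 + r) ^ N ≤ C := by
  obtain ⟨k, hk⟩ := exists_nat_ge ((N : ℝ) / a)
  have hk' : (N : ℝ) ≤ a * k := by
    rw [div_le_iff₀ ha] at hk; linarith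
  refine ⟨2 ^ N * (1 + k.factorial / lam ^ k), by positivity, fun r hr => ?_⟩
  have hra : 0 ≤ r ^ a := Real.rpow_nonneg hr a
  have he1 : Real.exp (-lam * r ^ a) ≤ 1 := by
    rw [Real.exp_le_one_iff]; nlinarith [mul_nonneg hl.le hra]
  have hq : (0 : ℝ) ≤ k.factorial / lam ^ k := by positivity
  have h2 : (0 : ℝ) < 2 ^ N := by positivity
  rcases le_total r 1 with h | h
  · calc Real.exp (-lam * r ^ a) * (1 + r) ^ N ≤ 1 * 2 ^ N := by
          gcongr; linarith
      _ ≤ _ := by nlinarith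
  · have h1 : (1 + r) ^ N ≤ 2 ^ N * r ^ N := by
      rw [← mul_pow]; gcongr; linarith
    have h3 : r ^ N ≤ (r ^ a) ^ k := by
      rw [← Real.rpow_natCast, ← Real.rpow_natCast, ← Real.rpow_mul hr]
      exact Real.rpow_le_rpow_of_exponent_le h hk'
    have h4 : (lam * r ^ a) ^ k / k.factorial ≤ Real.exp (lam * r ^ a) :=
      Real.pow_div_factorial_le_exp _ (by positivity) k
    have h5 : (r ^ a) ^ k ≤ k.factorial / lam ^ k * Real.exp (lam * r ^ a) := by
      rw [mul_pow, div_le_iff₀ (by positivity)] at h4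
      rw [div_mul_eq_mul_div, le_div_iff₀ (by positivity)]
      linarith
    calc Real.exp (-lam * r ^ a) * (1 + r) ^ N
        ≤ Real.exp (-lam * r ^ a) *
          (2 ^ N * (k.factorial / lam ^ k * Real.exp (lam * r ^ a))) := by
          gcongr; exact h1.trans (by gcongr; exact h3.trans h5)
      _ = 2 ^ N * (k.factorial / lam ^ k) := by
          have : Real.exp (-lam * r ^ a) * Real.exp (lam * r ^ a) = 1 := by
            rw [← Real.exp_add]; simp
          linear_combination (2 ^ N * (k.factorial / lam ^ k)) * this
      _ ≤ _ := by nlinarith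

lemma norm_le_euclNorm {k : ℕ} (x : Fin k → ℝ) : ‖x‖ ≤ euclNorm x := by
  refine (pi_norm_le_iff_of_nonneg (Real.sqrt_nonneg _)).2 fun i => ?_
  rw [Real.norm_eq_abs]
  apply Real.abs_le_sqrt
  exact Finset.single_le_sum (f := fun i => x i ^ 2) (fun i _ => sq_nonneg _) (Finset.mem_univ i)

lemma euclNorm_sq {k : ℕ} (x : Fin k → ℝ) : euclNorm x ^ 2 = x ⬝ᵥ x := by
  rw [euclNorm, Real.sq_sqrt (Finset.sum_nonneg fun i _ => sq_nonneg _)]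
  simp [dotProduct, sq]

lemma euclNorm_sq_le {k : ℕ} (x : Fin k → ℝ) : euclNorm x ^ 2 ≤ k * ‖x‖ ^ 2 := by
  rw [euclNorm, Real.sq_sqrt (Finset.sum_nonneg fun i _ => sq_nonneg _)]
  calc ∑ i, x i ^ 2 ≤ ∑ _i : Fin k, ‖x‖ ^ 2 := by
        refine Finset.sum_le_sum fun i _ => ?_
        rw [← sq_abs, ← Real.norm_eq_abs]; gcongr; exact norm_le_pi_norm x i
    _ = _ := by simp

lemma mulVec_upper {k l : ℕ} (B : Matrix (Fin k) (Fin l) ℝ) :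
    ∃ C : ℝ, 0 < C ∧ ∀ t, ‖B *ᵥ t‖ ≤ C * ‖t‖ := by
  let f : (Fin l → ℝ) →L[ℝ] (Fin k → ℝ) := LinearMap.toContinuousLinearMap (Matrix.mulVecLin B)
  refine ⟨‖f‖ + 1, by positivity, fun t => ?_⟩
  have := f.le_opNorm t
  have h2 : f t = B *ᵥ t := rfl
  rw [h2] at this
  nlinarith [norm_nonneg t]

lemma mulVec_lower {k l : ℕ} (B : Matrix (Fin k) (Fin l) ℝ)
    (hB : ∀ t, B *ᵥ t = 0 → t = 0) :
    ∃ m : ℝ, 0 < m ∧ ∀ t, m * ‖t‖ ≤ ‖B *ᵥ t‖ := by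
  have hker : (Matrix.mulVecLin B).ker = ⊥ := by
    rw [LinearMap.ker_eq_bot']; exact hB
  obtain ⟨K, hK, h⟩ := LinearMap.exists_antilipschitzWith _ hker
  have hK' : (0 : ℝ) < K := by exact_mod_cast hK
  refine ⟨(K : ℝ)⁻¹, by positivity, fun t => ?_⟩
  have := h.le_mul_dist t 0
  simp only [dist_zero_right, map_zero, Matrix.mulVecLin_apply] at this
  rw [inv_mul_le_iff₀ hK']; exact this

lemma posDef_lower {k : ℕ} (V : Matrix (Fin k) (Fin k) ℝ) (hV : V.PosDef) :
    ∃ m : ℝ, 0 < m ∧ ∀ t, m * ‖t‖ ^ 2 ≤ t ⬝ᵥ (V *ᵥ t) := by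
  have hcont : Continuous fun x : Fin k → ℝ => x ⬝ᵥ (V *ᵥ x) :=
    Continuous.dotProduct continuous_id (Continuous.matrix_mulVec continuous_const continuous_id)
  have hpos : ∀ x : Fin k → ℝ, x ≠ 0 → 0 < x ⬝ᵥ (V *ᵥ x) := fun x hx => by
    have := hV.dotProduct_mulVec_pos hx
    simpa using this
  have hunit : ∀ t : Fin k → ℝ, t ≠ 0 → ‖t‖⁻¹ • t ∈ Metric.sphere (0 : Fin k → ℝ) 1 := by
    intro t ht
    have : ‖t‖ ≠ 0 := norm_ne_zero_iff.2 ht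
    simp [norm_smul, this]
  rcases (Metric.sphere (0 : Fin k → ℝ) 1).eq_empty_or_nonempty with h0 | h0
  · refine ⟨1, one_pos, fun t => ?_⟩
    by_cases ht : t = 0
    · simp [ht]
    · have := hunit t ht
      rw [h0] at this; exact this.elim
  · obtain ⟨y, hy, hmin⟩ := (isCompact_sphere (0 : Fin k → ℝ) 1).exists_isMinOn h0
      hcont.continuousOn
    have hy0 : y ≠ 0 := by
      rintro rfl; simp at hy
    refine ⟨_, hpos y hy0, fun t => ?_⟩
    by_cases ht : t = 0
    · simp [ht]
    · have h1 := hmin (hunit t ht)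
      have h2 : 0 < ‖t‖ := norm_pos_iff.2 ht
      simp only [Set.mem_ofPred_eq, Matrix.mulVec_smul, dotProduct_smul, smul_dotProduct,
        smul_eq_mul] at h1
      have h3 : ‖t‖⁻¹ * (‖t‖⁻¹ * (t ⬝ᵥ V *ᵥ t)) * ‖t‖ ^ 2 = t ⬝ᵥ V *ᵥ t := by
        field_simp
      rw [← h3]
      gcongr

/-- The standard Gaussian density satisfies all bounds. -/
lemma gauss_facts {d : ℕ} (A : Matrix (Fin d) (Fin d) ℝ) (hA : A.PosDef) :
    (∀ x, 0 < gaussDensity 0 A x) ∧ Continuous (gaussDensity 0 A) ∧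
    (∀ N : ℕ, ∃ C : ℝ, 0 ≤ C ∧ ∀ x, gaussDensity 0 A x * (1 + ‖x‖) ^ N ≤ C) ∧
    (∀ r : ℝ, ∃ k : ℝ, 0 < k ∧ ∀ x, ‖x‖ ≤ r → k ≤ gaussDensity 0 A x) := by
  have hdet := hA.det_pos
  have hpos : ∀ x, 0 < gaussDensity 0 A x := fun x => by
    unfold gaussDensity; positivity
  have hcont : Continuous (gaussDensity 0 A) := by
    unfold gaussDensity
    simp only [sub_zero]
    have : Continuous fun x : Fin d → ℝ => x ⬝ᵥ (A⁻¹ *ᵥ x) :=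
      Continuous.dotProduct continuous_id (Continuous.matrix_mulVec continuous_const continuous_id)
    fun_prop
  refine ⟨hpos, hcont, fun N => ?_, fun r => ?_⟩
  · obtain ⟨m, hm, h⟩ := posDef_lower A⁻¹ hA.inv
    obtain ⟨C, hC, hb⟩ := expDecay (m / 2) 2 (by positivity) (by norm_num) N
    refine ⟨(Real.sqrt ((2 * Real.pi) ^ d * A.det))⁻¹ * C, by positivity, fun x => ?_⟩
    unfold gaussDensity
    rw [mul_assoc]
    gcongr
    refine le_trans ?_ (hb ‖x‖ (norm_nonneg _))
    refine mul_le_mul_of_nonneg_right (Real.exp_le_exp.2 ?_) (by positivity)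
    have := h x
    rw [sub_zero]
    have h2 : ‖x‖ ^ (2 : ℝ) = ‖x‖ ^ 2 := by exact_mod_cast Real.rpow_natCast ‖x‖ 2
    rw [h2]; linarith
  · obtain ⟨x0, h0⟩ | h0 := (Metric.closedBall (0 : Fin d → ℝ) r).eq_empty_or_nonempty.symm
    · obtain ⟨y, hy, hmin⟩ := (isCompact_closedBall (0 : Fin d → ℝ) r).exists_isMinOn ⟨x0, h0⟩
        hcont.continuousOn
      exact ⟨_, hpos y, fun x hx => hmin (by simpa using hx)⟩
    · refine ⟨1, one_pos, fun x hx => ?_⟩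
      have : x ∈ Metric.closedBall (0 : Fin d → ℝ) r := by simpa using hx
      rw [h0] at this; exact this.elim

lemma gauss_shift {d : ℕ} (A : Matrix (Fin d) (Fin d) ℝ) (μ x : Fin d → ℝ) :
    gaussDensity μ A x = gaussDensity 0 A (x - μ) := by
  simp [gaussDensity]

lemma gauss_scale {d : ℕ} (A : Matrix (Fin d) (Fin d) ℝ) (hA : A.PosDef) (c : ℝ) (hc : 0 < c)
    (μ x : Fin d → ℝ) :
    gaussDensity μ ((c⁻¹) ^ 2 • A) x = c ^ d * gaussDensity 0 A (c • (x - μ)) := by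
  have hdet := hA.det_pos
  unfold gaussDensity
  have h1 : ((c⁻¹) ^ 2 • A)⁻¹ = c ^ 2 • A⁻¹ := by
    apply Matrix.inv_eq_right_inv
    rw [Matrix.smul_mul, Matrix.mul_smul, smul_smul, Matrix.mul_nonsing_inv _ hdet.ne'.isUnit]
    rw [← mul_pow, inv_mul_cancel₀ hc.ne']; simp
  have h2 : Real.sqrt ((2 * Real.pi) ^ d * ((c⁻¹) ^ 2 • A).det) =
      (c ^ d)⁻¹ * Real.sqrt ((2 * Real.pi) ^ d * A.det) := by
    rw [Matrix.det_smul, Fintype.card_fin]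
    rw [show (2 * Real.pi) ^ d * (((c⁻¹) ^ 2) ^ d * A.det) =
      ((c ^ d)⁻¹) ^ 2 * ((2 * Real.pi) ^ d * A.det) by
        rw [← pow_mul, mul_comm 2 d, pow_mul, inv_pow]; ring]
    rw [Real.sqrt_mul (by positivity), Real.sqrt_sq (by positivity)]
  rw [h1, h2, mul_inv, inv_inv, sub_zero]
  simp only [Matrix.smul_mulVec, Matrix.mulVec_smul, dotProduct_smul, smul_dotProduct, smul_eq_mul]
  rw [mul_assoc]
  congr 4
  ring

end ABC
namespace ABC

lemma integral_lower {k : ℕ} (f : (Fin k → ℝ) → ℝ) (hf0 : ∀ x, 0 ≤ f x) (hf : Integrable f)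
    (m r : ℝ) (h : ∀ x, ‖x‖ ≤ r → m ≤ f x) :
    m * volume.real (Metric.closedBall (0 : Fin k → ℝ) r) ≤ ∫ x, f x := by
  calc m * volume.real (Metric.closedBall (0 : Fin k → ℝ) r)
      = ∫ _x in Metric.closedBall (0 : Fin k → ℝ) r, m := by
        rw [setIntegral_const, smul_eq_mul, mul_comm]
    _ ≤ ∫ x in Metric.closedBall (0 : Fin k → ℝ) r, f x := by
        refine setIntegral_mono_on ?_ hf.integrableOn measurableSet_closedBall
          (fun x hx => h x (by simpa using hx))
        exact integrableOn_const (isCompact_closedBall _ _).measure_lt_top.ne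
    _ ≤ ∫ x, f x := setIntegral_le_integral hf (Eventually.of_forall hf0)

lemma vol_pos {k : ℕ} (r : ℝ) (hr : 0 < r) :
    0 < volume.real (Metric.closedBall (0 : Fin k → ℝ) r) :=
  ENNReal.toReal_pos (Metric.measure_closedBall_pos volume _ hr).ne'
    (isCompact_closedBall _ _).measure_lt_top.ne

lemma integrable_inv_pow (d : ℕ) :
    Integrable (fun w : Fin d → ℝ => ((1 + ‖w‖) ^ (d + 1))⁻¹) := by
  have h := integrable_one_add_norm (E := Fin d → ℝ) (μ := volume) (r := (d : ℝ) + 1) (by simp)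
  refine h.congr (Eventually.of_forall fun w => ?_)
  have : (0 : ℝ) ≤ 1 + ‖w‖ := by positivity
  simp only
  rw [Real.rpow_neg this]
  congr 1
  exact_mod_cast Real.rpow_natCast (1 + ‖w‖) (d + 1)

lemma core {p d : ℕ} (F G : (Fin d → ℝ) → ℝ) (hF0 : ∀ w, 0 ≤ F w) (hG0 : ∀ w, 0 ≤ G w)
    (mF : Measurable F) (mG : Measurable G) (N : ℕ) (CF CG : ℝ) (hCF : 0 ≤ CF) (hCG : 0 ≤ CG)
    (hF : ∀ w, F w * (1 + ‖w‖) ^ (N + (d + 1)) ≤ CF)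
    (hG : ∀ w, G w * (1 + ‖w‖) ^ N ≤ CG)
    (S R m Cb kF kG r r' ρ : ℝ) (hS : 0 ≤ S) (hR : 0 ≤ R) (hm : 0 < m) (hCb : 0 ≤ Cb)
    (hkF : 0 < kF) (hkG : 0 < kG)
    (hr : 0 < r) (hρ : 0 < ρ) (hFl : ∀ w, ‖w‖ ≤ r → kF ≤ F w) (hGl : ∀ w, ‖w‖ ≤ r' → kG ≤ G w)
    (hrad : Cb * ρ + S * r + R ≤ r') :
    ∃ C : ℝ, 0 ≤ C ∧ ∀ B : Matrix (Fin d) (Fin p) ℝ, (∀ t, m * ‖t‖ ≤ ‖B *ᵥ t‖) →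
      (∀ t, ‖B *ᵥ t‖ ≤ Cb * ‖t‖) → ∀ s : ℝ, 0 ≤ s → s ≤ S → ∀ b : Fin d → ℝ, ‖b‖ ≤ R →
      ∀ t : Fin p → ℝ, (∫ w, F w * G (B *ᵥ t - s • w - b)) /
        (∫ t' : Fin p → ℝ, ∫ w, F w * G (B *ᵥ t' - s • w - b)) ≤ C / (1 + ‖t‖) ^ N := by
  set D : ℝ := 1 + (1 + S + R) / m with hD
  have hD0 : 0 < D := by positivity
  set J : ℝ := ∫ w : Fin d → ℝ, ((1 + ‖w‖) ^ (d + 1))⁻¹ with hJ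
  have hJ0 : 0 ≤ J := integral_nonneg fun w => by positivity
  set k1 : ℝ := kF * kG * volume.real (Metric.closedBall (0 : Fin d → ℝ) r) with hk1
  have hk1p : 0 < k1 := mul_pos (mul_pos hkF hkG) (vol_pos r hr)
  set k2 : ℝ := k1 * volume.real (Metric.closedBall (0 : Fin p → ℝ) ρ) with hk2
  have hk2p : 0 < k2 := mul_pos hk1p (vol_pos ρ hρ)
  refine ⟨CF * CG * D ^ N * J / k2, by positivity, ?_⟩
  intro B hBl hBu s hs hsS b hb
  have hpt : ∀ (t : Fin p → ℝ) (w : Fin d → ℝ), F w * G (B *ᵥ t - s • w - b) ≤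
      CF * CG * D ^ N / (1 + ‖t‖) ^ N * ((1 + ‖w‖) ^ (d + 1))⁻¹ := by
    intro t w
    set x := B *ᵥ t - s • w - b with hx
    have h1 : m * ‖t‖ ≤ ‖x‖ + S * ‖w‖ + R := by
      refine (hBl t).trans ?_
      have : B *ᵥ t = x + s • w + b := by rw [hx]; abel
      rw [this]
      have h2 : ‖s • w‖ ≤ S * ‖w‖ := by
        rw [norm_smul, Real.norm_of_nonneg hs]; gcongr
      linarith [norm_add₃_le (a := x) (b := s • w) (c := b)]
    have h2 : 1 + ‖t‖ ≤ D * ((1 + ‖x‖) * (1 + ‖w‖)) := by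
      have hx0 := norm_nonneg x
      have hw0 := norm_nonneg w
      have hxw := mul_nonneg hx0 hw0
      have h3 : ‖t‖ ≤ (‖x‖ + S * ‖w‖ + R) / m := by
        rw [le_div_iff₀ hm]; linarith
      have h4 : (‖x‖ + S * ‖w‖ + R) / m ≤ (1 + S + R) / m * ((1 + ‖x‖) * (1 + ‖w‖)) := by
        rw [div_mul_eq_mul_div]
        gcongr
        have : (1 + S + R) * ((1 + ‖x‖) * (1 + ‖w‖)) =
          (1 + S + R) * (1 + ‖x‖ + ‖w‖ + ‖x‖ * ‖w‖) := by ring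
        rw [this]
        nlinarith [mul_nonneg hS hx0, mul_nonneg hR hx0, mul_nonneg hR hw0,
          mul_nonneg hS hxw, mul_nonneg hR hxw]
      have h5 : 1 ≤ (1 + ‖x‖) * (1 + ‖w‖) := by nlinarith
      rw [hD, add_mul]; linarith
    have h6 : (1 + ‖t‖) ^ N ≤ D ^ N * ((1 + ‖x‖) ^ N * (1 + ‖w‖) ^ N) := by
      rw [← mul_pow, ← mul_pow]; gcongr
    rw [← div_eq_mul_inv, div_div, le_div_iff₀ (by positivity)]
    calc F w * G x * ((1 + ‖t‖) ^ N * (1 + ‖w‖) ^ (d + 1))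
        ≤ F w * G x * (D ^ N * ((1 + ‖x‖) ^ N * (1 + ‖w‖) ^ N) * (1 + ‖w‖) ^ (d + 1)) := by
          have := mul_nonneg (hF0 w) (hG0 x)
          gcongr
      _ = (F w * (1 + ‖w‖) ^ (N + (d + 1))) * (G x * (1 + ‖x‖) ^ N) * D ^ N := by
          rw [pow_add]; ring
      _ ≤ CF * CG * D ^ N := by
          have := mul_nonneg (hG0 x) (by positivity : 0 ≤ (1 + ‖x‖) ^ N)
          gcongr
          · exact hF w
          · exact hG x
  have hnn : ∀ (t : Fin p → ℝ) (w : Fin d → ℝ), 0 ≤ F w * G (B *ᵥ t - s • w - b) :=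
    fun t w => mul_nonneg (hF0 w) (hG0 _)
  have hint : ∀ t : Fin p → ℝ, Integrable fun w => F w * G (B *ᵥ t - s • w - b) := by
    intro t
    refine ((integrable_inv_pow d).const_mul (CF * CG * D ^ N / (1 + ‖t‖) ^ N)).mono' ?_ ?_
    · refine Measurable.aestronglyMeasurable (mF.mul (mG.comp ?_))
      fun_prop
    · refine Eventually.of_forall fun w => ?_
      rw [Real.norm_of_nonneg (hnn t w)]; exact hpt t w
  have hup : ∀ t : Fin p → ℝ, (∫ w, F w * G (B *ᵥ t - s • w - b)) ≤
      CF * CG * D ^ N / (1 + ‖t‖) ^ N * J := by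
    intro t
    rw [hJ, ← integral_const_mul]
    exact integral_mono (hint t) ((integrable_inv_pow d).const_mul _) (hpt t)
  have hlo : ∀ t : Fin p → ℝ, ‖t‖ ≤ ρ → k1 ≤ ∫ w, F w * G (B *ᵥ t - s • w - b) := by
    intro t ht
    refine integral_lower _ (hnn t) (hint t) _ _ fun w hw => ?_
    refine mul_le_mul (hFl w hw) (hGl _ ?_) hkG.le (hF0 w)
    have h1 : ‖s • w‖ ≤ S * r := by
      rw [norm_smul, Real.norm_of_nonneg hs]; gcongr
    have h2 : ‖B *ᵥ t‖ ≤ Cb * ρ := (hBu t).trans (by gcongr)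
    have h3 := norm_sub_le (B *ᵥ t - s • w) b
    have h4 := norm_sub_le (B *ᵥ t) (s • w)
    linarith
  intro t
  by_cases hI : Integrable fun t' : Fin p → ℝ => ∫ w, F w * G (B *ᵥ t' - s • w - b)
  · have h1 : k2 ≤ ∫ t' : Fin p → ℝ, ∫ w, F w * G (B *ᵥ t' - s • w - b) :=
      integral_lower _ (fun t => integral_nonneg (hnn t)) hI _ _ hlo
    calc _ ≤ (CF * CG * D ^ N / (1 + ‖t‖) ^ N * J) / k2 := by
          have : 0 ≤ ∫ w, F w * G (B *ᵥ t - s • w - b) := integral_nonneg (hnn t)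
          gcongr
          exact hup t
      _ = _ := by field_simp
  · rw [integral_undef hI, div_zero]; positivity

/-- lower bound of the t density -/
lemma tDensity_lower {p : ℕ} (γ : ℝ) (hγ : 0 < γ) (Si : Matrix (Fin p) (Fin p) ℝ) (R : ℝ)
    (hR : 0 ≤ R) (N : ℕ) (hN : γ + p ≤ N) :
    ∃ k : ℝ, 0 < k ∧ ∀ t μ : Fin p → ℝ, ‖μ‖ ≤ R →
      k / (1 + ‖t‖) ^ N ≤ tDensity p γ (Si *ᵥ (t - μ)) := by
  obtain ⟨C, hC, hSi⟩ := mulVec_upper Si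
  set c0 := Real.Gamma ((γ + p) / 2) / (Real.Gamma (γ / 2) * (γ * Real.pi) ^ ((p : ℝ) / 2))
  have hc0 : 0 < c0 := by
    have h1 : 0 < Real.Gamma ((γ + p) / 2) := Real.Gamma_pos_of_pos (by positivity)
    have h2 : 0 < Real.Gamma (γ / 2) := Real.Gamma_pos_of_pos (by positivity)
    have := Real.pi_pos
    positivity
  set E : ℝ := 1 + p * (C * (1 + R)) ^ 2 / γ with hE
  have hE0 : 0 < E := by positivity
  refine ⟨c0 * E ^ (-(γ + p) / 2), by positivity, fun t μ hμ => ?_⟩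
  unfold tDensity
  rw [mul_div_assoc]
  refine mul_le_mul_of_nonneg_left ?_ hc0.le
  set x := Si *ᵥ (t - μ)
  have ht0 := norm_nonneg t
  have hx : ‖x‖ ≤ C * (1 + R) * (1 + ‖t‖) := by
    have h1 := hSi (t - μ)
    have h2 := norm_sub_le t μ
    calc ‖x‖ ≤ C * ‖t - μ‖ := h1
      _ ≤ C * ((1 + R) * (1 + ‖t‖)) := by gcongr; nlinarith
      _ = _ := by ring
  have h1 : 1 + euclNorm x ^ 2 / γ ≤ E * (1 + ‖t‖) ^ 2 := by
    have h2 : euclNorm x ^ 2 ≤ p * (C * (1 + R) * (1 + ‖t‖)) ^ 2 :=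
      (euclNorm_sq_le x).trans (by gcongr)
    have h3 : 1 ≤ (1 + ‖t‖) ^ 2 := by nlinarith
    calc 1 + euclNorm x ^ 2 / γ
        ≤ (1 + ‖t‖) ^ 2 + p * (C * (1 + R) * (1 + ‖t‖)) ^ 2 / γ := by gcongr
      _ = _ := by rw [hE]; ring
  have hb : (0 : ℝ) < 1 + ‖t‖ := by positivity
  have hneg : -(γ + p) / 2 ≤ 0 := by
    have : (0 : ℝ) ≤ p := by positivity
    linarith
  calc E ^ (-(γ + p) / 2) / (1 + ‖t‖) ^ N
      ≤ E ^ (-(γ + p) / 2) * (1 + ‖t‖) ^ (-(γ + p)) := by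
        rw [div_eq_mul_inv, ← Real.rpow_natCast, ← Real.rpow_neg hb.le]
        gcongr
        · linarith
    _ = (E * (1 + ‖t‖) ^ 2) ^ (-(γ + p) / 2) := by
        rw [Real.mul_rpow hE0.le (by positivity), ← Real.rpow_natCast, ← Real.rpow_mul hb.le]
        congr 2; push_cast; ring
    _ ≤ _ := Real.rpow_le_rpow_of_nonpos (by positivity) h1 hneg

end ABC
namespace ABC

lemma kernel_facts {p d : ℕ} (K : (Fin d → ℝ) → ℝ) (hK0 : ∀ v, 0 ≤ K v)
    (hKmax : ∃ v, K v = 1) (hKshape : KernelShape p K) :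
    Measurable K ∧ (∀ N : ℕ, ∃ C : ℝ, 0 ≤ C ∧ ∀ x, K x * (1 + ‖x‖) ^ N ≤ C) ∧
    ((∃ r k : ℝ, 0 < r ∧ 0 < k ∧ ∀ v, ‖v‖ ≤ r → k ≤ K v) ∨ ∀ᵐ v, K v = 0) := by
  obtain ⟨-, ⟨Λ, hΛ, κ, hκ, hanti⟩, c₁, α₁, C, hc₁, hα₁, htail⟩ := hKshape
  have hQc : Continuous fun v : Fin d → ℝ => ∑ i, Λ i * v i ^ 2 := by fun_prop
  have hQ0 : ∀ v : Fin d → ℝ, 0 ≤ ∑ i, Λ i * v i ^ 2 := fun v =>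
    Finset.sum_nonneg fun i _ => mul_nonneg (hΛ i).le (sq_nonneg _)
  refine ⟨?_, fun N => ?_, ?_⟩
  · have h1 : Antitone fun x : ℝ => κ (max x 0) := fun x y hxy =>
      hanti (Set.mem_Ici.2 (le_max_right _ _)) (Set.mem_Ici.2 (le_max_right _ _))
        (max_le_max_right 0 hxy)
    have h2 : K = (fun x : ℝ => κ (max x 0)) ∘ fun v : Fin d → ℝ => ∑ i, Λ i * v i ^ 2 := by
      funext v
      simp only [Function.comp, max_eq_left (hQ0 v)]
      exact hκ v
    rw [h2]
    exact h1.measurable.comp hQc.measurable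
  · obtain ⟨D, hD, h⟩ := expDecay c₁ α₁ hc₁ hα₁ N
    refine ⟨|C| * D, by positivity, fun x => ?_⟩
    have h1 : K x ≤ |C| * Real.exp (-c₁ * ‖x‖ ^ α₁) := by
      refine (htail x).trans ?_
      have h2 : ‖x‖ ^ α₁ ≤ euclNorm x ^ α₁ :=
        Real.rpow_le_rpow (norm_nonneg _) (norm_le_euclNorm x) hα₁.le
      have h3 : Real.exp (-c₁ * euclNorm x ^ α₁) ≤ Real.exp (-c₁ * ‖x‖ ^ α₁) :=
        Real.exp_le_exp.2 (by nlinarith)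
      exact mul_le_mul (le_abs_self C) h3 (Real.exp_pos _).le (abs_nonneg C)
    calc K x * (1 + ‖x‖) ^ N ≤ |C| * Real.exp (-c₁ * ‖x‖ ^ α₁) * (1 + ‖x‖) ^ N := by gcongr
      _ = |C| * (Real.exp (-c₁ * ‖x‖ ^ α₁) * (1 + ‖x‖) ^ N) := by ring
      _ ≤ _ := by gcongr; exact h _ (norm_nonneg _)
  · by_cases hex : ∃ v1 : Fin d → ℝ, v1 ≠ 0 ∧ 0 < K v1
    · left
      obtain ⟨v1, hv1, hKv1⟩ := hex
      have hQ1 : 0 < ∑ i, Λ i * v1 i ^ 2 := by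
        obtain ⟨i, hi⟩ := Function.ne_iff.1 hv1
        refine Finset.sum_pos' (fun i _ => mul_nonneg (hΛ i).le (sq_nonneg _))
          ⟨i, Finset.mem_univ i, mul_pos (hΛ i) ?_⟩
        have : v1 i ≠ 0 := hi
        positivity
      have hnb : ∀ᶠ v : Fin d → ℝ in 𝓝 0, ∑ i, Λ i * v i ^ 2 < ∑ i, Λ i * v1 i ^ 2 :=
        hQc.continuousAt.eventually_lt_const (by simpa using hQ1)
      obtain ⟨r, hr, hball⟩ := Metric.eventually_nhds_iff_ball.1 hnb
      refine ⟨r / 2, K v1, by positivity, hKv1, fun v hv => ?_⟩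
      rw [hκ v1, hκ v]
      refine hanti (Set.mem_Ici.2 (hQ0 _)) (Set.mem_Ici.2 (hQ0 _)) (hball v ?_).le
      rw [mem_ball_zero_iff]; linarith
    · have hz : ∀ v : Fin d → ℝ, v ≠ 0 → K v = 0 := fun v hv =>
        le_antisymm (not_lt.1 fun h => hex ⟨v, hv, h⟩) (hK0 v)
      rcases Nat.eq_zero_or_pos d with hd | hd
      · left
        subst hd
        obtain ⟨v0, hv0⟩ := hKmax
        refine ⟨1, 1, one_pos, one_pos, fun v _ => ?_⟩
        rw [Subsingleton.elim v v0, hv0]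
      · right
        haveI : Nonempty (Fin d) := ⟨⟨0, hd⟩⟩
        have h0 : ({0}ᶜ : Set (Fin d → ℝ)) ∈ ae (volume : Measure (Fin d → ℝ)) :=
          compl_mem_ae_iff.2 (measure_singleton 0)
        filter_upwards [h0] with v hv
        exact hz v (by simpa using hv)

lemma rawg_nonneg {p d : ℕ} (Ds : Matrix (Fin d) (Fin p) ℝ) (Ahalf A : Matrix (Fin d) (Fin d) ℝ)
    (K : (Fin d → ℝ) → ℝ) (hK0 : ∀ v, 0 ≤ K v) (c : ℝ) (fc : Bool) (T : Fin d → ℝ)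
    (τ : Matrix (Fin d) (Fin p) ℝ) (t : Fin p → ℝ) (v : Fin d → ℝ) :
    0 ≤ rawg Ds Ahalf A K c fc T τ t v := by
  have := hK0 v
  unfold rawg gaussDensity
  split_ifs <;> positivity

lemma gnorm_nonneg {p d : ℕ} (Ds : Matrix (Fin d) (Fin p) ℝ) (Ahalf A : Matrix (Fin d) (Fin d) ℝ)
    (K : (Fin d → ℝ) → ℝ) (hK0 : ∀ v, 0 ≤ K v) (c : ℝ) (fc : Bool) (T : Fin d → ℝ)
    (τ : Matrix (Fin d) (Fin p) ℝ) (t : Fin p → ℝ) :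
    0 ≤ gnorm Ds Ahalf A K c fc T τ t := by
  have h : ∀ t, 0 ≤ gmargin Ds Ahalf A K c fc T τ t := fun t =>
    integral_nonneg fun v => rawg_nonneg Ds Ahalf A K hK0 c fc T τ t v
  exact div_nonneg (h t) (integral_nonneg h)

lemma gmargin_true {p d : ℕ} (Ds : Matrix (Fin d) (Fin p) ℝ) (Ahalf A : Matrix (Fin d) (Fin d) ℝ)
    (K : (Fin d → ℝ) → ℝ) (c : ℝ) (T : Fin d → ℝ)
    (τ : Matrix (Fin d) (Fin p) ℝ) (t : Fin p → ℝ) :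
    gmargin Ds Ahalf A K c true T τ t =
      ∫ w, K w * gaussDensity 0 A ((Ds + τ) *ᵥ t - c • w - Ahalf *ᵥ T) := by
  unfold gmargin rawg
  congr 1
  funext v
  rw [if_pos rfl, gauss_shift, mul_comm, sub_add_eq_sub_sub]

lemma gmargin_false {p d : ℕ} (Ds : Matrix (Fin d) (Fin p) ℝ)
    (Ahalf A : Matrix (Fin d) (Fin d) ℝ) (hA : A.PosDef)
    (K : (Fin d → ℝ) → ℝ) (c : ℝ) (hc : 0 < c) (T : Fin d → ℝ)
    (τ : Matrix (Fin d) (Fin p) ℝ) (t : Fin p → ℝ) :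
    gmargin Ds Ahalf A K c false T τ t =
      ∫ w, gaussDensity 0 A w * K ((Ds + τ) *ᵥ t - c⁻¹ • w - c⁻¹ • (Ahalf *ᵥ T)) := by
  set y := (Ds + τ) *ᵥ t with hy
  set b := c⁻¹ • (Ahalf *ᵥ T) with hb
  set h : (Fin d → ℝ) → ℝ := fun w => gaussDensity 0 A w * K (y - c⁻¹ • w - b) with hh
  have h1 : ∀ v, rawg Ds Ahalf A K c false T τ t v = c ^ d * h (c • ((y - b) - v)) := by
    intro v
    unfold rawg
    rw [if_neg (by simp), gauss_scale A hA c hc]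
    simp only [hh]
    rw [smul_smul, inv_mul_cancel₀ hc.ne', one_smul]
    have e1 : y - (y - b - v) - b = v := by abel
    have e2 : y - (v + b) = y - b - v := by abel
    rw [e1, ← hy, ← hb, e2]
    ring
  unfold gmargin
  simp_rw [h1]
  rw [integral_const_mul, integral_sub_left_eq_self (fun v => h (c • v)) volume (y - b),
    Measure.integral_comp_smul_of_nonneg volume h c (hR := hc.le)]
  simp only [Module.finrank_fintype_fun_eq_card, Fintype.card_fin, smul_eq_mul]
  rw [← mul_assoc, mul_inv_cancel₀ (by positivity), one_mul]

/-- Control of perturbed Jacobians. -/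
lemma perturb {p d : ℕ} (Ds : Matrix (Fin d) (Fin p) ℝ) (hDs : ∀ t, Ds *ᵥ t = 0 → t = 0) :
    ∃ δ m Cb : ℝ, 0 < δ ∧ 0 < m ∧ 0 < Cb ∧ ∀ τ : Matrix (Fin d) (Fin p) ℝ,
      (δ • (1 : Matrix (Fin p) (Fin p) ℝ) - τᵀ * τ).PosSemidef →
      (∀ t, m * ‖t‖ ≤ ‖(Ds + τ) *ᵥ t‖) ∧ (∀ t, ‖(Ds + τ) *ᵥ t‖ ≤ Cb * ‖t‖) := by
  obtain ⟨m, hm, hl⟩ := mulVec_lower Ds hDs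
  obtain ⟨C, hC, hu⟩ := mulVec_upper Ds
  refine ⟨m ^ 2 / (4 * (p + 1)), m / 2, C + m / 2, by positivity, by positivity, by positivity, ?_⟩
  intro τ hτ
  have hτb : ∀ t, ‖τ *ᵥ t‖ ≤ m / 2 * ‖t‖ := by
    intro t
    have h1 := hτ.dotProduct_mulVec_nonneg t
    simp only [star_trivial, Matrix.sub_mulVec, Matrix.smul_mulVec, Matrix.one_mulVec,
      dotProduct_sub, dotProduct_smul, smul_eq_mul] at h1
    have h2 : t ⬝ᵥ ((τᵀ * τ) *ᵥ t) = (τ *ᵥ t) ⬝ᵥ (τ *ᵥ t) := by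
      rw [← Matrix.mulVec_mulVec, Matrix.dotProduct_mulVec, Matrix.vecMul_transpose]
    rw [h2, ← euclNorm_sq, ← euclNorm_sq] at h1
    have h3 := euclNorm_sq_le t
    have h4 : ‖τ *ᵥ t‖ ^ 2 ≤ euclNorm (τ *ᵥ t) ^ 2 := by
      gcongr; exact norm_le_euclNorm _
    have h5 : m ^ 2 / (4 * (p + 1)) * euclNorm t ^ 2 ≤ (m / 2 * ‖t‖) ^ 2 := by
      calc m ^ 2 / (4 * (p + 1)) * euclNorm t ^ 2
          ≤ m ^ 2 / (4 * (p + 1)) * ((p + 1) * ‖t‖ ^ 2) := by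
            gcongr; nlinarith [sq_nonneg ‖t‖]
        _ = _ := by field_simp; ring
    refine le_of_sq_le_sq ?_ (by positivity)
    linarith
  refine ⟨fun t => ?_, fun t => ?_⟩
  · rw [Matrix.add_mulVec]
    have h1 := norm_sub_le (Ds *ᵥ t + τ *ᵥ t) (τ *ᵥ t)
    rw [add_sub_cancel_right] at h1
    linarith [hl t, hτb t]
  · rw [Matrix.add_mulVec]
    have h1 := norm_add_le (Ds *ᵥ t) (τ *ᵥ t)
    linarith [hu t, hτb t]

lemma gnorm_bound {p d : ℕ}
    (Ds : Matrix (Fin d) (Fin p) ℝ) (A Ahalf : Matrix (Fin d) (Fin d) ℝ) (hA : A.PosDef)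
    (K : (Fin d → ℝ) → ℝ) (hK0 : ∀ v, 0 ≤ K v)
    (hKmax : ∃ v, K v = 1) (hKshape : KernelShape p K)
    (c : ℕ → ℝ) (hcpos : ∀ n, 0 < c n) (fc : Bool)
    (hc : if fc then ∃ L : ℝ, 0 ≤ L ∧ Filter.Tendsto c Filter.atTop (nhds L)
      else Filter.Tendsto c Filter.atTop Filter.atTop)
    (m Cb : ℝ) (hm : 0 < m) (hCb : 0 < Cb) (N : ℕ) (R : ℝ) (hR : 0 ≤ R) :
    ∃ C : ℝ, 0 ≤ C ∧ ∀ᶠ n in atTop, ∀ T : Fin d → ℝ, ‖T‖ ≤ R →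
      ∀ τ : Matrix (Fin d) (Fin p) ℝ, (∀ t, m * ‖t‖ ≤ ‖(Ds + τ) *ᵥ t‖) →
      (∀ t, ‖(Ds + τ) *ᵥ t‖ ≤ Cb * ‖t‖) → ∀ t : Fin p → ℝ,
      gnorm Ds Ahalf A K (c n) fc T τ t ≤ C / (1 + ‖t‖) ^ N := by
  obtain ⟨mK, hKd, hKl⟩ := kernel_facts K hK0 hKmax hKshape
  obtain ⟨hφ0, hφc, hφd, hφl⟩ := gauss_facts A hA
  obtain ⟨Ca, hCa, hAh⟩ := mulVec_upper Ahalf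
  rcases hKl with ⟨r, k, hr, hk, hKl⟩ | hKae
  swap
  · refine ⟨0, le_rfl, Eventually.of_forall fun n T _ τ _ _ t => ?_⟩
    have : gmargin Ds Ahalf A K (c n) fc T τ t = 0 := by
      unfold gmargin
      rw [integral_eq_zero_of_ae]
      filter_upwards [hKae] with v hv
      simp [rawg, hv]
    simp [gnorm, this]
  obtain ⟨CK1, hCK1, hK1⟩ := hKd (N + (d + 1))
  obtain ⟨CK2, hCK2, hK2⟩ := hKd N
  obtain ⟨CP1, hCP1, hP1⟩ := hφd (N + (d + 1))
  obtain ⟨CP2, hCP2, hP2⟩ := hφd N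
  cases fc with
  | true =>
    simp only [if_true] at hc
    obtain ⟨L, hL, hcL⟩ := hc
    obtain ⟨kφ, hkφ, hφl⟩ := hφl (Cb * 1 + (L + 1) * r + Ca * R)
    obtain ⟨C, hC, h⟩ := core (p := p) K (gaussDensity 0 A) hK0 (fun w => (hφ0 w).le) mK
      hφc.measurable N CK1 CP2 hCK1 hCP2 hK1 hP2 (L + 1) (Ca * R) m Cb k kφ r
      (Cb * 1 + (L + 1) * r + Ca * R) 1 (by positivity) (by positivity) hm hCb.le hk hkφ hr one_pos
      hKl hφl le_rfl
    refine ⟨C, hC, ?_⟩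
    filter_upwards [hcL.eventually_le_const (show L < L + 1 by linarith)] with n hn T hT τ h1 h2 t
    unfold gnorm
    simp_rw [gmargin_true]
    exact h (Ds + τ) h1 h2 (c n) (hcpos n).le hn _ ((hAh T).trans (by gcongr)) t
  | false =>
    simp only [Bool.false_eq_true, if_false] at hc
    obtain ⟨kφ, hkφ, hφl⟩ := hφl 1
    obtain ⟨C, hC, h⟩ := core (p := p) (gaussDensity 0 A) K (fun w => (hφ0 w).le) hK0
      hφc.measurable mK N CP1 CK2 hCP1 hCK2 hP1 hK2 (r / 3) (r / 3) m Cb kφ k 1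
      r (r / (3 * Cb)) (by positivity) (by positivity) hm hCb.le hkφ hk one_pos (by positivity)
      hφl hKl (by
        have : Cb * (r / (3 * Cb)) = r / 3 := by field_simp
        rw [this]; linarith)
    refine ⟨C, hC, ?_⟩
    have hinv : Tendsto (fun n => (c n)⁻¹) atTop (𝓝 0) := tendsto_inv_atTop_zero.comp hc
    have hinv2 : Tendsto (fun n => (c n)⁻¹ * (Ca * R)) atTop (𝓝 0) := by
      simpa using hinv.mul_const (Ca * R)
    filter_upwards [hinv.eventually_le_const (show 0 < r / 3 by positivity),
      hinv2.eventually_le_const (show 0 < r / 3 by positivity)] with n hn hn2 T hT τ h1 h2 t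
    unfold gnorm
    simp_rw [gmargin_false Ds Ahalf A hA K (c n) (hcpos n)]
    have hci : 0 ≤ (c n)⁻¹ := (inv_pos.2 (hcpos n)).le
    refine h (Ds + τ) h1 h2 (c n)⁻¹ hci hn _ ?_ t
    rw [norm_smul, Real.norm_of_nonneg hci]
    refine le_trans ?_ hn2
    gcongr
    exact (hAh T).trans (by gcongr)

end ABC

open ABC in
/-- Proposition 4.4: if `K(v)^α / T(v; γ0) ≤ M` for some `γ0 > 0`, `α ∈ (0,1)` and a
constant `M`, then condition (C10) is satisfied by the multivariate t base density
`q = T(·; γ)` for any degrees of freedom `γ ≤ γ0` and any scale matrix `Σ`. -/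
theorem t_proposal_satisfies_C10
    {p d : ℕ} {Ω : Type*} [MeasurableSpace Ω]
    (P : MeasureTheory.Measure Ω) [MeasureTheory.IsProbabilityMeasure P]
    (Ds : Matrix (Fin d) (Fin p) ℝ) (A Ahalf : Matrix (Fin d) (Fin d) ℝ)
    (hA : A.PosDef) (hAhalf : Ahalf * Ahalf = A)
    (hDs : IsUnit (Dsᵀ * A⁻¹ * Ds))
    (K : (Fin d → ℝ) → ℝ) (hK0 : ∀ v, 0 ≤ K v) (hK1 : ∀ v, K v ≤ 1)
    (hKmax : ∃ v, K v = 1) (hKmean : (∫ v : Fin d → ℝ, K v • v) = 0)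
    (hKshape : KernelShape p K)
    (c : ℕ → ℝ) (hcpos : ∀ n, 0 < c n) (fc : Bool)
    (hc : if fc then ∃ L : ℝ, 0 ≤ L ∧ Filter.Tendsto c Filter.atTop (nhds L)
      else Filter.Tendsto c Filter.atTop Filter.atTop)
    (Tobs : ℕ → Ω → (Fin d → ℝ))
    (hTobs : IsBigOp P (fun n ω => ‖Tobs n ω‖) (fun _ => 1))
    (γ0 α Mb : ℝ) (hγ0 : 0 < γ0) (hα : α ∈ Set.Ioo (0 : ℝ) 1)
    (hbound : ∀ v : Fin d → ℝ, K v ^ α / tDensity d γ0 v ≤ Mb) :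
    ∀ γ : ℝ, 0 < γ → γ ≤ γ0 →
      ∀ Sgsqrt : Matrix (Fin p) (Fin p) ℝ, IsUnit Sgsqrt →
        Cond10 P Ds Ahalf A K c fc Tobs (tDensity p γ) Sgsqrt := by
  intro γ hγ _ Sg _
  have hinj : ∀ t, Ds *ᵥ t = 0 → t = 0 := by
    intro t ht
    apply Matrix.mulVec_injective_of_isUnit hDs
    simp only [← Matrix.mulVec_mulVec, ht, Matrix.mulVec_zero]
  obtain ⟨δ, m, Cb, hδ, hm, hCb, hpert⟩ := perturb Ds hinj
  refine ⟨1 / 2, by norm_num, δ, hδ, fun μ hμ εp hεp => ?_⟩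
  obtain ⟨R1, hR1, hT⟩ := hTobs (εp / 2) (by positivity)
  obtain ⟨R2, hR2, hM⟩ := hμ (εp / 2) (by positivity)
  obtain ⟨N, hN⟩ := exists_nat_ge (γ + p)
  obtain ⟨C, hC, hgn⟩ := gnorm_bound Ds A Ahalf hA K hK0 hKmax hKshape c hcpos fc hc m Cb hm hCb
    (2 * N) R1 hR1.le
  obtain ⟨k, hk, hq⟩ := tDensity_lower γ hγ Sg⁻¹ R2 hR2.le N hN
  refine ⟨Real.sqrt C / k + 1, by positivity, ?_⟩
  filter_upwards [hT, hM, hgn] with n hTn hMn hg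
  have hsub : {ω | ∃ (t : Fin p → ℝ) (τ : Matrix (Fin d) (Fin p) ℝ),
            (δ • (1 : Matrix (Fin p) (Fin p) ℝ) - τᵀ * τ).PosSemidef ∧
            (Real.sqrt C / k + 1) * tDensity p γ (Sg⁻¹ *ᵥ (t - μ n ω)) <
              gnorm Ds Ahalf A K (c n) fc (Tobs n ω) τ t ^ ((1 : ℝ) / 2)} ⊆
      {ω | R1 * |(1 : ℝ)| < |‖Tobs n ω‖|} ∪ {ω | R2 * |(1 : ℝ)| < |‖μ n ω‖|} := by
    rintro ω ⟨t, τ, hτ, hlt⟩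
    by_contra hcon
    simp only [Set.mem_union, Set.mem_ofPred_eq, abs_one, mul_one, abs_norm, not_or, not_lt] at hcon
    obtain ⟨h1, h2⟩ := hpert τ hτ
    have h3 := hg (Tobs n ω) hcon.1 τ h1 h2 t
    have h4 := hq t (μ n ω) hcon.2
    have h0 := gnorm_nonneg Ds Ahalf A K hK0 (c n) fc (Tobs n ω) τ t
    have hb : (0 : ℝ) < (1 + ‖t‖) ^ N := by positivity
    have h5 : gnorm Ds Ahalf A K (c n) fc (Tobs n ω) τ t ^ ((1 : ℝ) / 2) ≤
        Real.sqrt C / (1 + ‖t‖) ^ N := by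
      rw [← Real.sqrt_eq_rpow]
      refine (Real.sqrt_le_sqrt h3).trans_eq ?_
      rw [Real.sqrt_div hC, mul_comm 2 N, pow_mul, Real.sqrt_sq hb.le]
    have h6 : Real.sqrt C / (1 + ‖t‖) ^ N ≤
        (Real.sqrt C / k + 1) * (k / (1 + ‖t‖) ^ N) := by
      have : (Real.sqrt C / k + 1) * (k / (1 + ‖t‖) ^ N) =
        Real.sqrt C / (1 + ‖t‖) ^ N + k / (1 + ‖t‖) ^ N := by field_simp
      rw [this]
      have : 0 ≤ k / (1 + ‖t‖) ^ N := by positivity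
      linarith
    have h7 : (Real.sqrt C / k + 1) * (k / (1 + ‖t‖) ^ N) ≤
        (Real.sqrt C / k + 1) * tDensity p γ (Sg⁻¹ *ᵥ (t - μ n ω)) := by gcongr
    linarith
  calc _ ≤ P ({ω | R1 * |(1 : ℝ)| < |‖Tobs n ω‖|} ∪ {ω | R2 * |(1 : ℝ)| < |‖μ n ω‖|}) :=
        measure_mono hsub
    _ ≤ _ := measure_union_le _ _
    _ ≤ ENNReal.ofReal (εp / 2) + ENNReal.ofReal (εp / 2) := add_le_add hTn hMn
    _ = ENNReal.ofReal εp := by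
        rw [← ENNReal.ofReal_add (by positivity) (by positivity), add_halves]
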